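/- arXiv:2110.10097 — 2 statements merged into one kernel-verified Lean document; each statement's English description precedes it below -/
import Mathlib

section
/- Assume α₁ − α₂α₃ + α₃² ≠ 0. Then the pair (A, C) of the mixed-traffic system is observable, i.e. the observability matrix col(C, CA, CA², …, CA^{2n−1}) ∈ ℝ^{2n(n+m)×2n} has rank 2n. -/
open Matrix

/-- The controllability matrix `[B, AB, …, A^{N−1}B]` of a pair `(A, B)`. -/
noncomputable def ctrbMat {N p : ℕ} (A : Matrix (Fin N) (Fin N) ℝ)
    (B : Matrix (Fin N) (Fin p) ℝ) : Matrix (Fin N) (Fin N × Fin p) ℝ :=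
  Matrix.of fun r kj => (A ^ (kj.1 : ℕ) * B) r kj.2

/-- The observability matrix `col(C, CA, …, CA^{N−1})` of a pair `(A, C)`. -/
noncomputable def obsvMat {N p : ℕ} (A : Matrix (Fin N) (Fin N) ℝ)
    (C : Matrix (Fin p) (Fin N) ℝ) : Matrix (Fin N × Fin p) (Fin N) ℝ :=
  Matrix.of fun kj c => (C * A ^ (kj.1 : ℕ)) kj.2 c

noncomputable def matP1 (α1 α2 : ℝ) : Matrix (Fin 2) (Fin 2) ℝ := !![0, -1; α1, -α2]
noncomputable def matP2 (α3 : ℝ) : Matrix (Fin 2) (Fin 2) ℝ := !![0, 1; 0, α3]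
noncomputable def matS1 : Matrix (Fin 2) (Fin 2) ℝ := !![(0:ℝ), -1; 0, 0]
noncomputable def matS2 : Matrix (Fin 2) (Fin 2) ℝ := !![(0:ℝ), 1; 0, 0]

def fin2 (k : ℕ) : Fin 2 := ⟨k % 2, Nat.mod_lt _ (by norm_num)⟩

/-- The mixed-traffic system matrix `A ∈ ℝ^{2n×2n}` (vehicles 0-indexed `0,…,n−1`;
the CAV locations are given by the strictly increasing map `ι : Fin m → Fin n`).
Block `(i,i)` is `S₁` if vehicle `i` is a CAV, `P₁` otherwise; block `(i,i−1)` is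
`S₂` if vehicle `i` is a CAV, `P₂` otherwise; all other blocks vanish. -/
noncomputable def trafficA (n m : ℕ) (ι : Fin m → Fin n) (α1 α2 α3 : ℝ) :
    Matrix (Fin (2 * n)) (Fin (2 * n)) ℝ :=
  Matrix.of fun r c =>
    if (r : ℕ) / 2 = (c : ℕ) / 2 then
      (if ∃ k, (ι k : ℕ) = (r : ℕ) / 2 then matS1 (fin2 r) (fin2 c)
       else matP1 α1 α2 (fin2 r) (fin2 c))
    else if (r : ℕ) / 2 = (c : ℕ) / 2 + 1 then
      (if ∃ k, (ι k : ℕ) = (r : ℕ) / 2 then matS2 (fin2 r) (fin2 c)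
       else matP2 α3 (fin2 r) (fin2 c))
    else 0

/-- The input matrix `B ∈ ℝ^{2n×m}`: the `k`-th column is the standard basis
vector whose nonzero entry sits at the (0-indexed) position `2·ι(k)+1`,
i.e. the velocity component of the `k`-th CAV. -/
noncomputable def trafficB (n m : ℕ) (ι : Fin m → Fin n) :
    Matrix (Fin (2 * n)) (Fin m) ℝ :=
  Matrix.of fun r k => if (r : ℕ) = 2 * (ι k : ℕ) + 1 then 1 else 0

/-- The output matrix `C ∈ ℝ^{(n+m)×2n}`: the first `n` rows pick out the velocity
errors of all vehicles, the last `m` rows pick out the spacing errors of the CAVs. -/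
noncomputable def trafficC (n m : ℕ) (ι : Fin m → Fin n) :
    Matrix (Fin (n + m)) (Fin (2 * n)) ℝ :=
  Matrix.of fun j c =>
    if h : (j : ℕ) < n then (if (c : ℕ) = 2 * (j : ℕ) + 1 then 1 else 0)
    else (if (c : ℕ) = 2 * (ι ⟨(j : ℕ) - n, by have := j.isLt; omega⟩ : ℕ) then 1 else 0)

/-- **Theorem 2 (Observability).** If `α₁ − α₂α₃ + α₃² ≠ 0`, the mixed-traffic pair
`(A, C)` is observable: the observability matrix `col(C, CA, …, CA^{2n−1})`
has rank `2n`. -/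
theorem mixed_traffic_observable
    (n m : ℕ) (hn : 1 ≤ n) (hm : 1 ≤ m) (hmn : m ≤ n)
    (ι : Fin m → Fin n) (hmono : StrictMono ι)
    (α1 α2 α3 : ℝ) (hα1 : 0 < α1) (hα3 : 0 < α3) (hα23 : α3 < α2)
    (hcond : α1 - α2 * α3 + α3 ^ 2 ≠ 0) :
    (obsvMat (trafficA n m ι α1 α2 α3) (trafficC n m ι)).rank = 2 * n := by
  have key : Function.Injective
      (obsvMat (trafficA n m ι α1 α2 α3) (trafficC n m ι)).mulVecLin := by
    rw [injective_iff_map_eq_zero]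
    intro v hv
    have hrow : ∀ (k : Fin (2 * n)) (j : Fin (n + m)),
        ((trafficC n m ι * trafficA n m ι α1 α2 α3 ^ (k : ℕ)) *ᵥ v) j = 0 := by
      intro k j
      have := congrFun hv (k, j)
      simpa [obsvMat, Matrix.mulVec, dotProduct] using this
    have hvel : ∀ (w : Fin (2 * n) → ℝ) (i : ℕ) (hi : i < n),
        (trafficC n m ι *ᵥ w) ⟨i, by omega⟩ = w ⟨2 * i + 1, by omega⟩ := by
      intro w i hi
      simp only [Matrix.mulVec, dotProduct, trafficC, Matrix.of_apply, hi, dif_pos]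
      rw [Finset.sum_eq_single ⟨2 * i + 1, by omega⟩]
      · simp
      · intro b _ hb
        rw [if_neg (fun h => hb (Fin.ext h)), zero_mul]
      · simp
    have hspc : ∀ (w : Fin (2 * n) → ℝ) (k : Fin m),
        (trafficC n m ι *ᵥ w) ⟨n + k, by omega⟩ = w ⟨2 * (ι k : ℕ), by omega⟩ := by
      intro w k
      simp only [Matrix.mulVec, dotProduct, trafficC, Matrix.of_apply]
      rw [Finset.sum_eq_single ⟨2 * (ι k : ℕ), by omega⟩]
      · simp
      · intro b _ hb
        have : (b : ℕ) ≠ 2 * (ι k : ℕ) := fun h => hb (Fin.ext h)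
        simp [this]
      · simp
    have hodd : ∀ (i : ℕ) (hi : i < n), v ⟨2 * i + 1, by omega⟩ = 0 := by
      intro i hi
      have := hrow ⟨0, by omega⟩ ⟨i, by omega⟩
      simp only [pow_zero, Matrix.mul_one] at this
      rwa [hvel v i hi] at this
    have heven : ∀ (i : ℕ) (hi : i < n), v ⟨2 * i, by omega⟩ = 0 := by
      intro i hi
      by_cases hS : ∃ k, (ι k : ℕ) = i
      · obtain ⟨k, rfl⟩ := hS
        have := hrow ⟨0, by omega⟩ ⟨n + k, by omega⟩
        simp only [pow_zero, Matrix.mul_one] at this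
        rwa [hspc v k] at this
      · have := hrow ⟨1, by omega⟩ ⟨i, by omega⟩
        simp only [pow_one] at this
        rw [← Matrix.mulVec_mulVec, hvel _ i hi] at this
        simp only [Matrix.mulVec, dotProduct] at this
        rw [Finset.sum_eq_single ⟨2 * i, by omega⟩] at this
        · have e1 : (2 * i + 1) / 2 = i := by omega
          have e2 : (2 * i) / 2 = i := by omega
          have f1 : fin2 (2 * i + 1) = 1 := by
            apply Fin.ext; simp [fin2]
          have f2 : fin2 (2 * i) = 0 := by
            apply Fin.ext; simp [fin2]
          simp only [trafficA, Matrix.of_apply, e1, e2, f1, f2, if_true, if_neg hS] at this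
          simp [matP1] at this
          rcases this with h | h
          · exact absurd h hα1.ne'
          · exact h
        · intro b _ hb
          have hb' : (b : ℕ) ≠ 2 * i := fun h => hb (Fin.ext h)
          rcases Nat.even_or_odd' (b : ℕ) with ⟨c, hc | hc⟩
          · have f1 : fin2 (2 * i + 1) = 1 := by
              apply Fin.ext; simp [fin2]
            have f2 : fin2 (b : ℕ) = 0 := by
              apply Fin.ext; simp [fin2]; omega
            have g1 : ¬ ((2 * i + 1) / 2 = (b : ℕ) / 2) := by omega
            simp only [trafficA, Matrix.of_apply, g1, f1, f2, if_false]
            simp [matS2, matP2]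
          · have : b = ⟨2 * c + 1, by omega⟩ := Fin.ext hc
            rw [this, hodd c (by omega), mul_zero]
        · simp
    funext b
    rcases Nat.even_or_odd' (b : ℕ) with ⟨c, hc | hc⟩
    · have : b = ⟨2 * c, by omega⟩ := Fin.ext hc
      rw [this, heven c (by omega)]; rfl
    · have : b = ⟨2 * c + 1, by omega⟩ := Fin.ext hc
      rw [this, hodd c (by omega)]; rfl
  rw [Matrix.rank, LinearMap.finrank_range_of_inj key]
  simp
end

section
/- Assume α₁ − α₂α₃ + α₃² ≠ 0. Let B̂ = [H, B] ∈ ℝ^{2n×(m+1)} be the combined input matrix obtained by adjoining the disturbance vector H as a first column to B. Then the pair (A, B̂) is controllable (the controllability matrix [B̂, AB̂, …, A^{2n−1}B̂] has rank 2n) and the pair (A, C) is observable (the observability matrix col(C, CA, …, CA^{2n−1}) has rank 2n). -/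
open Matrix

/-- The combined input matrix `B̂ = [H, B] ∈ ℝ^{2n×(m+1)}`, obtained by adjoining the
disturbance vector `H = (1, α₃, 0, …, 0)ᵀ` as a first column of `B`. -/
noncomputable def trafficBhat (n m : ℕ) (ι : Fin m → Fin n) (α3 : ℝ) :
    Matrix (Fin (2 * n)) (Fin (m + 1)) ℝ :=
  Matrix.of fun r k =>
    if hk : (k : ℕ) = 0 then
      (if (r : ℕ) = 0 then 1 else if (r : ℕ) = 1 then α3 else 0)
    else
      (if (r : ℕ) = 2 * (ι ⟨(k : ℕ) - 1, by have := k.isLt; omega⟩ : ℕ) + 1 then 1 else 0)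


lemma rank_of_left_ker {N : ℕ} {q : Type*} [Fintype q] (M : Matrix (Fin N) q ℝ)
    (h : ∀ w : Fin N → ℝ, w ᵥ* M = 0 → w = 0) : M.rank = N := by
  have : LinearIndependent ℝ M.row := by
    rw [← Matrix.vecMul_injective_iff]
    intro x y hxy
    have h2 : (x - y) ᵥ* M = 0 := by
      rw [Matrix.sub_vecMul]; exact sub_eq_zero.mpr hxy
    exact sub_eq_zero.mp (h _ h2)
  simpa using this.rank_matrix

lemma ctrb_all_pow {N p : ℕ} (A : Matrix (Fin N) (Fin N) ℝ)
    (B : Matrix (Fin N) (Fin p) ℝ) (w : Fin N → ℝ) (hw : w ᵥ* ctrbMat A B = 0) (k : ℕ) :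
    w ᵥ* (A ^ k * B) = 0 := by
  have hlt : ∀ j < N, w ᵥ* (A ^ j * B) = 0 := by
    intro j hj
    funext c
    have := congrFun hw (⟨j, hj⟩, c)
    simpa [Matrix.vecMul, dotProduct, ctrbMat] using this
  rcases Nat.eq_zero_or_pos N with h0 | hN
  · subst h0
    funext c
    simp [Matrix.vecMul, dotProduct]
  rw [Matrix.pow_eq_aeval_mod_charpoly]
  have hd : (Polynomial.X ^ k %ₘ A.charpoly).natDegree < N := by
    have h1 := Polynomial.natDegree_modByMonic_lt (Polynomial.X ^ k) A.charpoly_monic (by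
      intro h
      have := A.charpoly_natDegree_eq_dim
      rw [h] at this
      simp at this
      omega)
    rwa [A.charpoly_natDegree_eq_dim, Fintype.card_fin] at h1
  rw [Polynomial.aeval_eq_sum_range' hd, Matrix.sum_mul, Matrix.vecMul_sum]
  refine Finset.sum_eq_zero fun j hj => ?_
  rw [Matrix.smul_mul, Matrix.vecMul_smul, hlt j (Finset.mem_range.mp hj), smul_zero]

lemma pbh {N p : ℕ} (A : Matrix (Fin N) (Fin N) ℝ) (B : Matrix (Fin N) (Fin p) ℝ)
    (h : ∀ (l : ℂ) (w : Fin N → ℂ), w ᵥ* (A.map Complex.ofRealHom) = l • w →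
      w ᵥ* (B.map Complex.ofRealHom) = 0 → w = 0) : (ctrbMat A B).rank = N := by
  refine rank_of_left_ker _ fun w hw => ?_
  by_contra hne
  have hall := ctrb_all_pow A B w hw
  set AC := A.map Complex.ofRealHom with hAC
  set BC := B.map Complex.ofRealHom with hBC
  let U : Submodule ℂ (Fin N → ℂ) :=
    { carrier := {u | ∀ k : ℕ, u ᵥ* (AC ^ k * BC) = 0}
      zero_mem' := fun k => by simp
      add_mem' := fun {a b} ha hb k => by
        rw [Matrix.add_vecMul, ha k, hb k, add_zero]
      smul_mem' := fun c a ha k => by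
        rw [Matrix.smul_vecMul, ha k, smul_zero] }
  have hT : ∀ u ∈ U, AC.vecMulLinear u ∈ U := by
    intro u hu k
    have := hu (k + 1)
    rw [pow_succ', Matrix.mul_assoc, ← Matrix.vecMul_vecMul] at this
    simpa using this
  let wC : Fin N → ℂ := fun i => Complex.ofRealHom (w i)
  have hwC : wC ∈ U := by
    intro k
    have e : AC ^ k * BC = (A ^ k * B).map Complex.ofRealHom := by
      rw [Matrix.map_mul, hAC, Matrix.map_pow]
    funext c
    have := congrArg Complex.ofRealHom (congrFun (hall k) c)
    rw [e]
    rw [RingHom.map_vecMul] at this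
    simpa [wC, Function.comp_def] using this
  have hwne : (⟨wC, hwC⟩ : U) ≠ 0 := by
    intro h0
    apply hne
    funext i
    have := congrFun (congrArg Subtype.val h0) i
    simpa [wC] using this
  have : Nontrivial U := ⟨⟨_, _, hwne⟩⟩
  obtain ⟨l, hl⟩ := Module.End.exists_eigenvalue (AC.vecMulLinear.restrict hT)
  obtain ⟨u, hu⟩ := hl.exists_hasEigenvector
  apply hu.2
  apply Subtype.ext
  refine h l u.1 ?_ ?_
  · have := congrArg Subtype.val hu.apply_eq_smul
    simpa using this
  · have := u.2 0
    simpa using this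

/-- zero-extension of a vector -/
noncomputable def extv {N : ℕ} (w : Fin N → ℂ) (k : ℕ) : ℂ := if h : k < N then w ⟨k, h⟩ else 0

lemma sum_extv {N : ℕ} (w : Fin N → ℂ) (k : ℕ) (x : ℂ) :
    ∑ r : Fin N, w r * (if (r : ℕ) = k then x else 0) = extv w k * x := by
  unfold extv
  split_ifs with h
  · rw [Finset.sum_eq_single ⟨k, h⟩]
    · simp
    · intro b _ hb
      rw [if_neg, mul_zero]
      intro hh; exact hb (Fin.ext hh)
    · simp
  · rw [zero_mul]
    refine Finset.sum_eq_zero fun r _ => ?_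
    rw [if_neg, mul_zero]
    have := r.2; omega

lemma col_p (n m : ℕ) (ι : Fin m → Fin n) (α1 α2 α3 : ℝ) (i : ℕ) (hi : i < n) (r : Fin (2*n)) :
    trafficA n m ι α1 α2 α3 r ⟨2 * i, by omega⟩ =
      if (r : ℕ) = 2 * i + 1 then (if ∃ k, (ι k : ℕ) = i then 0 else α1) else 0 := by
  obtain ⟨r, hr⟩ := r
  obtain ⟨j, rfl | rfl⟩ : ∃ j, r = 2 * j ∨ r = 2 * j + 1 := ⟨r / 2, by omega⟩
  · have e1 : 2 * j / 2 = j := by omega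
    have e2 : 2 * i / 2 = i := by omega
    have e3 : ∀ j, fin2 (2 * j) = 0 := fun j => by simp [fin2]
    have e4 : ¬ (2 * j = 2 * i + 1) := by omega
    simp [trafficA, e1, e2, e3, e4, matP1, matP2, matS1, matS2]
  · have e1 : (2 * j + 1) / 2 = j := by omega
    have e2 : 2 * i / 2 = i := by omega
    have e3 : ∀ j, fin2 (2 * j) = 0 := fun j => by simp [fin2]
    have e4 : ∀ j, fin2 (2 * j + 1) = 1 := fun j => by ext; simp [fin2]
    by_cases h : j = i
    · subst h
      simp [trafficA, e1, e2, e3, e4, matP1, matP2, matS1, matS2]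
    · simp [trafficA, e1, e2, e3, e4, matP1, matP2, matS1, matS2, h]

lemma col_v (n m : ℕ) (ι : Fin m → Fin n) (α1 α2 α3 : ℝ) (i : ℕ) (hi : i < n) (r : Fin (2*n)) :
    trafficA n m ι α1 α2 α3 r ⟨2 * i + 1, by omega⟩ =
      (if (r : ℕ) = 2 * i then -1 else 0)
      + (if (r : ℕ) = 2 * i + 1 then (if ∃ k, (ι k : ℕ) = i then 0 else -α2) else 0)
      + (if (r : ℕ) = 2 * (i + 1) then 1 else 0)
      + (if (r : ℕ) = 2 * (i + 1) + 1 then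
          (if ∃ k, (ι k : ℕ) = i + 1 then 0 else α3) else 0) := by
  obtain ⟨r, hr⟩ := r
  have e2 : (2 * i + 1) / 2 = i := by omega
  have e3 : ∀ j, fin2 (2 * j) = 0 := fun j => by simp [fin2]
  have e4 : ∀ j, fin2 (2 * j + 1) = 1 := fun j => by ext; simp [fin2]
  obtain ⟨j, rfl | rfl⟩ : ∃ j, r = 2 * j ∨ r = 2 * j + 1 := ⟨r / 2, by omega⟩
  · have e1 : 2 * j / 2 = j := by omega
    have e5 : ∀ i, ¬ (2 * j = 2 * i + 1) := by omega
    by_cases h : j = i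
    · subst h
      simp [trafficA, e1, e2, e3, e4, e5, matP1, matP2, matS1, matS2]
    · by_cases h' : j = i + 1
      · subst h'
        simp [trafficA, e1, e2, e3, e4, e5, matP1, matP2, matS1, matS2]
      · have h'' : ¬ (2 * j = 2 * (i + 1)) := by omega
        simp [trafficA, e1, e2, e3, e4, e5, h, h', h'']
  · have e1 : (2 * j + 1) / 2 = j := by omega
    have e5 : ∀ i, ¬ (2 * j + 1 = 2 * i) := by omega
    by_cases h : j = i
    · subst h
      simp [trafficA, e1, e2, e3, e4, e5, matP1, matP2, matS1, matS2]
    · by_cases h' : j = i + 1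
      · subst h'
        simp [trafficA, e1, e2, e3, e4, e5, matP1, matP2, matS1, matS2]
      · have h'' : ¬ (2 * j = 2 * (i + 1)) := by omega
        simp [trafficA, e1, e2, e3, e4, e5, h, h', h'']

/-- The scalar recursion behind the eigenvector test. -/
lemma recursion (n : ℕ) (S : ℕ → Prop) (α1 α2 α3 : ℝ) (hα1 : 0 < α1) (hα3 : 0 < α3)
    (hcond : α1 - α2 * α3 + α3 ^ 2 ≠ 0) (l : ℂ) (a b : ℕ → ℂ)
    (han : a n = 0) (hbn : b n = 0)
    (hS : ∀ i < n, S i → b i = 0 ∧ l * a i = 0)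
    (hp : ∀ i < n, ¬ S i → b i * α1 = l * a i)
    (hv : ∀ i < n, - a i - α2 * b i + (a (i+1) + α3 * b (i+1)) = l * b i)
    (h0 : a 0 + α3 * b 0 = 0) : ∀ i < n, a i = 0 ∧ b i = 0 := by
  have h1 : (α1 : ℂ) ≠ 0 := by exact_mod_cast hα1.ne'
  have h3 : (α3 : ℂ) ≠ 0 := by exact_mod_cast hα3.ne'
  have hc : (α1 : ℂ) - α2 * α3 + α3 ^ 2 ≠ 0 := by exact_mod_cast hcond
  by_cases hl : l = 0
  · subst hl
    have hb : ∀ i < n, b i = 0 := by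
      intro i hi
      by_cases hs : S i
      · exact (hS i hi hs).1
      · have := hp i hi hs
        simpa [h1] using this
    have ha : ∀ i, i < n → a i = 0 := by
      intro i
      induction i with
      | zero => intro hi; simpa [hb 0 hi] using h0
      | succ i ih =>
        intro hi
        have := hv i (by omega)
        simpa [hb i (by omega), hb (i+1) hi, ih (by omega)] using this
    exact fun i hi => ⟨ha i hi, hb i hi⟩
  · have hS' : ∀ i < n, S i → a i = 0 ∧ b i = 0 := fun i hi hs =>
      ⟨by simpa [hl] using (hS i hi hs).2, (hS i hi hs).1⟩
    by_cases hz : l * α3 + α1 = 0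
    · have hg : ∀ i ≤ n, a i + α3 * b i = 0 := by
        intro i hi
        rcases hi.eq_or_lt with rfl | hi
        · simp [han, hbn]
        · by_cases hs : S i
          · simp [hS' i hi hs]
          · have := hp i hi hs
            have h5 : l * (a i + α3 * b i) = 0 := by linear_combination b i * hz - this
            exact (mul_eq_zero.mp h5).resolve_left hl
      intro i hi
      have e1 := hg i hi.le
      have e2 := hg (i+1) hi
      have e3 := hv i hi
      have : ((α1 : ℂ) - α2 * α3 + α3 ^ 2) * b i = 0 := by
        linear_combination α3 * e3 - α3 * e2 + α3 * e1 + b i * hz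
      have hb := (mul_eq_zero.mp this).resolve_left hc
      exact ⟨by simpa [hb] using e1, hb⟩
    · have key : ∀ i < n, a i + α3 * b i = 0 → a i = 0 ∧ b i = 0 := by
        intro i hi hg
        by_cases hs : S i
        · exact hS' i hi hs
        · have := hp i hi hs
          have h5 : (l * α3 + α1) * b i = 0 := by linear_combination this + l * hg
          have hb := (mul_eq_zero.mp h5).resolve_left hz
          exact ⟨by simpa [hb] using hg, hb⟩
      intro i
      induction i with
      | zero => exact fun hi => key 0 hi h0
      | succ i ih =>
        intro hi
        obtain ⟨ea, eb⟩ := ih (by omega)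
        refine key _ hi ?_
        have := hv i (by omega)
        simpa [ea, eb] using this

lemma traffic_ctrb (n m : ℕ) (ι : Fin m → Fin n)
    (α1 α2 α3 : ℝ) (hα1 : 0 < α1) (hα3 : 0 < α3)
    (hcond : α1 - α2 * α3 + α3 ^ 2 ≠ 0) :
    (ctrbMat (trafficA n m ι α1 α2 α3) (trafficBhat n m ι α3)).rank = 2 * n := by
  refine pbh _ _ fun l w hA hB => ?_
  have hext : ∀ k (hk : k < 2 * n), extv w k = w ⟨k, hk⟩ := fun k hk => by simp [extv, hk]
  have hcav : ∀ i, (∃ k, (ι k : ℕ) = i) → extv w (2 * i + 1) = 0 := by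
    rintro i ⟨k, rfl⟩
    have := congrFun hB k.succ
    simp only [Matrix.vecMul, dotProduct, Matrix.map_apply, trafficBhat, Matrix.of_apply,
      Fin.val_succ, Nat.succ_ne_zero, dite_false, Nat.add_sub_cancel, Fin.eta, apply_ite Complex.ofRealHom,
      map_one, map_zero, sum_extv, Pi.zero_apply, mul_one] at this
    exact this
  have h0 : extv w 0 + α3 * extv w 1 = 0 := by
    have := congrFun hB 0
    have e : ∀ r : Fin (2 * n), (Complex.ofRealHom (trafficBhat n m ι α3 r 0)) =
        (if (r : ℕ) = 0 then 1 else 0) + (if (r : ℕ) = 1 then (α3 : ℂ) else 0) := by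
      intro r
      simp only [trafficBhat, Matrix.of_apply]
      by_cases h : (r : ℕ) = 0 <;> by_cases h' : (r : ℕ) = 1 <;> simp [h, h'] <;> omega
    simp only [Matrix.vecMul, dotProduct, Matrix.map_apply, e, mul_add,
      Finset.sum_add_distrib, sum_extv, Pi.zero_apply] at this
    linear_combination this
  have hp : ∀ i, i < n → extv w (2 * i + 1) * (if ∃ k, (ι k : ℕ) = i then 0 else (α1 : ℂ)) =
      l * extv w (2 * i) := by
    intro i hi
    have := congrFun hA ⟨2 * i, by omega⟩
    simp only [Matrix.vecMul, dotProduct, Matrix.map_apply, col_p _ _ _ _ _ _ i hi,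
      apply_ite Complex.ofRealHom, map_zero, sum_extv, Pi.smul_apply, smul_eq_mul] at this
    rw [hext (2 * i) (by omega)]
    exact this
  have hv : ∀ i, i < n → - extv w (2 * i) +
      extv w (2 * i + 1) * (if ∃ k, (ι k : ℕ) = i then 0 else -(α2 : ℂ)) + extv w (2 * (i + 1)) +
      extv w (2 * (i + 1) + 1) * (if ∃ k, (ι k : ℕ) = i + 1 then 0 else (α3 : ℂ)) =
      l * extv w (2 * i + 1) := by
    intro i hi
    have := congrFun hA ⟨2 * i + 1, by omega⟩
    simp only [Matrix.vecMul, dotProduct, Matrix.map_apply, col_v _ _ _ _ _ _ i hi, map_add,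
      apply_ite Complex.ofRealHom, map_zero, map_one, map_neg, mul_add,
      Finset.sum_add_distrib, sum_extv, Pi.smul_apply, smul_eq_mul, mul_neg, mul_one] at this
    rw [hext (2 * i + 1) (by omega)] at this ⊢
    simpa [mul_add] using this
  have main := recursion n (fun i => ∃ k, (ι k : ℕ) = i) α1 α2 α3 hα1 hα3 hcond l
    (fun i => extv w (2 * i)) (fun i => extv w (2 * i + 1))
    (by simp [extv]) (by simp [extv])
    (fun i hi hs => ⟨hcav i hs, by have := hp i hi; rw [if_pos hs] at this; rw [← this]; simp⟩)
    (fun i hi hs => by have := hp i hi; rw [if_neg hs] at this; exact this)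
    (fun i hi => by
      have e1 : extv w (2 * i + 1) * (if ∃ k, (ι k : ℕ) = i then 0 else -(α2 : ℂ)) =
          - α2 * extv w (2 * i + 1) := by
        by_cases hs : ∃ k, (ι k : ℕ) = i
        · rw [if_pos hs, hcav i hs]; simp
        · rw [if_neg hs]; ring
      have e2 : extv w (2 * (i + 1) + 1) * (if ∃ k, (ι k : ℕ) = i + 1 then 0 else (α3 : ℂ)) =
          α3 * extv w (2 * (i + 1) + 1) := by
        by_cases hs : ∃ k, (ι k : ℕ) = i + 1
        · rw [if_pos hs, hcav _ hs]; simp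
        · rw [if_neg hs]; ring
      have := hv i hi
      rw [e1, e2] at this
      linear_combination this)
    h0
  funext ⟨r, hr⟩
  obtain ⟨j, rfl | rfl⟩ : ∃ j, r = 2 * j ∨ r = 2 * j + 1 := ⟨r / 2, by omega⟩
  · rw [← hext]; exact (main j (by omega)).1
  · rw [← hext]; exact (main j (by omega)).2

lemma traffic_obsv (n m : ℕ) (ι : Fin m → Fin n) (α1 α2 α3 : ℝ) (hα1 : 0 < α1) :
    (obsvMat (trafficA n m ι α1 α2 α3) (trafficC n m ι)).rank = 2 * n := by
  rw [← Matrix.rank_transpose]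
  refine rank_of_left_ker _ fun x hx => ?_
  rw [Matrix.vecMul_transpose] at hx
  have hk : ∀ k, k < 2 * n → trafficC n m ι *ᵥ (trafficA n m ι α1 α2 α3 ^ k *ᵥ x) = 0 := by
    intro k hk
    rw [Matrix.mulVec_mulVec]
    funext c
    have := congrFun hx (⟨k, hk⟩, c)
    simpa [Matrix.mulVec, dotProduct, obsvMat] using this
  have hCv : ∀ y : Fin (2 * n) → ℝ, trafficC n m ι *ᵥ y = 0 →
      ∀ j (hj : j < n), y ⟨2 * j + 1, by omega⟩ = 0 := by
    intro y hy j hj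
    have := congrFun hy ⟨j, by omega⟩
    simp only [Matrix.mulVec, dotProduct, trafficC, Matrix.of_apply, hj, dite_true,
      Pi.zero_apply] at this
    rw [Finset.sum_eq_single ⟨2 * j + 1, by omega⟩] at this
    · simpa using this
    · intro b _ hb
      rw [if_neg, zero_mul]
      intro h; exact hb (Fin.ext h)
    · simp
  have hCp : ∀ y : Fin (2 * n) → ℝ, trafficC n m ι *ᵥ y = 0 →
      ∀ k : Fin m, y ⟨2 * (ι k : ℕ), by have := (ι k).2; omega⟩ = 0 := by
    intro y hy k
    have := congrFun hy (Fin.natAdd n k)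
    have e : ¬ (n + (k : ℕ) < n) := by omega
    simp only [Matrix.mulVec, dotProduct, trafficC, Matrix.of_apply, Fin.val_natAdd, e, dite_false,
      Nat.add_sub_cancel_left, Fin.eta, Pi.zero_apply] at this
    rw [Finset.sum_eq_single ⟨2 * (ι k : ℕ), by have := (ι k).2; omega⟩] at this
    · simpa using this
    · intro b _ hb
      rw [if_neg, zero_mul]
      intro h; exact hb (Fin.ext h)
    · simp
  have hv : ∀ j (hj : j < n), x ⟨2 * j + 1, by omega⟩ = 0 := by
    intro j hj
    exact hCv x (by simpa using hk 0 (by omega)) j hj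
  have hp : ∀ j (hj : j < n), x ⟨2 * j, by omega⟩ = 0 := by
    intro j hj
    by_cases hs : ∃ k, (ι k : ℕ) = j
    · obtain ⟨k, rfl⟩ := hs
      exact hCp x (by simpa using hk 0 (by omega)) k
    · have := hCv _ (hk 1 (by omega)) j hj
      rw [pow_one] at this
      simp only [Matrix.mulVec, dotProduct] at this
      rw [Finset.sum_eq_single ⟨2 * j, by omega⟩] at this
      · rw [col_p _ _ _ _ _ _ j hj] at this
        simpa [hs, hα1.ne'] using this
      · rintro ⟨c, hc⟩ _ hb
        obtain ⟨i, rfl | rfl⟩ : ∃ i, c = 2 * i ∨ c = 2 * i + 1 := ⟨c / 2, by omega⟩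
        · rw [col_p _ _ _ _ _ _ i (by omega), if_neg, zero_mul]
          intro h
          apply hb
          ext
          simp at h ⊢
          omega
        · rw [hv i (by omega), mul_zero]
      · simp
  funext ⟨r, hr⟩
  obtain ⟨j, rfl | rfl⟩ : ∃ j, r = 2 * j ∨ r = 2 * j + 1 := ⟨r / 2, by omega⟩
  · exact hp j (by omega)
  · exact hv j (by omega)

/-- **Corollary 1.** If `α₁ − α₂α₃ + α₃² ≠ 0`, the reformulated mixed-traffic system
`(A, B̂, C)` with combined input matrix `B̂ = [H, B]` is controllable and observable. -/
theorem mixed_traffic_combined_controllable_and_observable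
    (n m : ℕ) (hn : 1 ≤ n) (hm : 1 ≤ m) (hmn : m ≤ n)
    (ι : Fin m → Fin n) (hmono : StrictMono ι)
    (α1 α2 α3 : ℝ) (hα1 : 0 < α1) (hα3 : 0 < α3) (hα23 : α3 < α2)
    (hcond : α1 - α2 * α3 + α3 ^ 2 ≠ 0) :
    (ctrbMat (trafficA n m ι α1 α2 α3) (trafficBhat n m ι α3)).rank = 2 * n ∧
      (obsvMat (trafficA n m ι α1 α2 α3) (trafficC n m ι)).rank = 2 * n := by
  exact ⟨traffic_ctrb n m ι α1 α2 α3 hα1 hα3 hcond, traffic_obsv n m ι α1 α2 α3 hα1⟩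
end
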